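/- arXiv:0705.1171 — 6 statements merged into one kernel-verified Lean document; each statement's English description precedes it below -/
import Mathlib

section
/- For every n ≥ 1 and every (α₁, …, αₙ) ∈ ℂⁿ, the set A(α₁, …, αₙ) is a simple cusp algebra of codimension n + 1 (i.e., it is a unital subalgebra of O(𝔻), dim_ℂ(O(𝔻)/A(α₁,…,αₙ)) = n + 1, z^{2n+2} O(𝔻) ⊆ A(α₁,…,αₙ), and con(A(α₁,…,αₙ)) = 1), and π_α is a primitive for it. -/
/-!
Write `π = π_α`, a polynomial of the form `z² (1 + z w(z))`.

* Since `π ^ (n+1)` is divisible by `z^{2n+2}`, dropping the condition `deg p ≤ n` does not change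
  `A(α₁, …, αₙ)`; without that condition, closure under products is clear.
* Codimension. The odd monomials `z, z³, …, z^{2n+1}` form a basis of `O(𝔻)/A`. They span: modulo
  `z^{k+1} O(𝔻)`, an element of `z^k O(𝔻)` is a multiple of `z^k`, which is an odd monomial or
  agrees with `π^{k/2}`, so descending induction on `k ≤ 2n+2` applies
  (`zO_subset_sup`). They are independent: if an odd polynomial of degree at most `2n+1` equals
  `p ∘ π + z^{2n+2} g`, comparing coefficients of `z^{2j}` for `j = 0, …, n` shows successively
  that each coefficient of `p` vanishes (`odd_sub_comp_eq_zero`).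
* Contact. Each element of `A` is `c + z² h`, so its derivative vanishes at `0`, whereas
  `π ∈ A` has `π''(0) = 2`.
-/

open scoped Classical

noncomputable section

/-- The open unit disk in `ℂ`. -/
def 𝔻 : Set ℂ := Metric.ball 0 1

lemma zero_mem_disk : (0 : ℂ) ∈ 𝔻 := Metric.mem_ball_self one_pos

/-- The origin, as a point of the disk. -/
def d0 : 𝔻 := ⟨0, zero_mem_disk⟩

/-- A function on the disk is holomorphic if it agrees on `𝔻` with a function
that is (complex) differentiable on `𝔻`. -/
def IsHolo (f : 𝔻 → ℂ) : Prop :=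
  ∃ F : ℂ → ℂ, DifferentiableOn ℂ F 𝔻 ∧ ∀ z : 𝔻, f z = F z

/-- `O(𝔻)`: the algebra of all holomorphic functions on the disk. -/
def HolDisk : Subalgebra ℂ (𝔻 → ℂ) where
  carrier := {f | IsHolo f}
  mul_mem' := by
    rintro f g ⟨F, hF, hf⟩ ⟨G, hG, hg⟩
    exact ⟨F * G, hF.mul hG, fun z => by simp [hf z, hg z]⟩
  add_mem' := by
    rintro f g ⟨F, hF, hf⟩ ⟨G, hG, hg⟩
    exact ⟨F + G, hF.add hG, fun z => by simp [hf z, hg z]⟩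
  one_mem' := ⟨fun _ => 1, differentiableOn_const 1, fun _ => rfl⟩
  zero_mem' := ⟨fun _ => 0, differentiableOn_const 0, fun _ => rfl⟩
  algebraMap_mem' := fun c => ⟨fun _ => c, differentiableOn_const c, fun _ => rfl⟩

/-- The `j`-th complex derivative of a holomorphic function on the disk, at a
point `a` (junk value `0` for non-holomorphic functions).  This is well defined
on `𝔻` since any two extensions agree on the open set `𝔻`. -/
def der (j : ℕ) (a : ℂ) (f : 𝔻 → ℂ) : ℂ :=
  if h : IsHolo f then iteratedDeriv j h.choose a else 0

/-- The `k`-th Taylor coefficient at `0` of a holomorphic function on the disk. -/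
def taylorCoeff (k : ℕ) (f : 𝔻 → ℂ) : ℂ := der k 0 f / (Nat.factorial k : ℂ)

/-- The coordinate function `z` on the disk. -/
def zfun : 𝔻 → ℂ := fun z => (z : ℂ)

/-- `z^m O(𝔻)`, as a subspace of functions on the disk. -/
def zO (m : ℕ) : Submodule ℂ (𝔻 → ℂ) where
  carrier := {f | ∃ g, IsHolo g ∧ f = zfun ^ m * g}
  add_mem' := by
    rintro f₁ f₂ ⟨g₁, hg₁, rfl⟩ ⟨g₂, hg₂, rfl⟩
    exact ⟨g₁ + g₂, add_mem (show g₁ ∈ HolDisk from hg₁) (show g₂ ∈ HolDisk from hg₂),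
      by ring⟩
  zero_mem' := ⟨0, (HolDisk : Subalgebra ℂ (𝔻 → ℂ)).zero_mem, by simp⟩
  smul_mem' := by
    rintro c f ⟨g, hg, rfl⟩
    exact ⟨c • g, SMulMemClass.smul_mem c (show g ∈ HolDisk from hg), by
      ext z; simp [zfun]; ring⟩

/-- The quotient vector space `O(𝔻)/A`. -/
abbrev OmodA (A : Subalgebra ℂ (𝔻 → ℂ)) :=
  HolDisk.toSubmodule ⧸ (A.toSubmodule.comap HolDisk.toSubmodule.subtype)

/-- `cod(A) = dim O(𝔻)/A`. -/
def cod (A : Subalgebra ℂ (𝔻 → ℂ)) : ℕ := Module.finrank ℂ (OmodA A)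

/-- `ord(A) = min {k : z^{k+1} O(𝔻) ⊆ A}`. -/
def ord (A : Subalgebra ℂ (𝔻 → ℂ)) : ℕ :=
  sInf {k : ℕ | (zO (k + 1) : Set (𝔻 → ℂ)) ⊆ (A : Set (𝔻 → ℂ))}

/-- `con(A) = max {n : f⁽ʲ⁾(0) = 0 for all f ∈ A and all 1 ≤ j ≤ n}`. -/
def con (A : Subalgebra ℂ (𝔻 → ℂ)) : ℕ :=
  sSup {n : ℕ | ∀ f ∈ A, ∀ j, 1 ≤ j → j ≤ n → der j 0 f = 0}

/-- A cusp algebra: a unital subalgebra of `O(𝔻)` of finite codimension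
containing `z^m O(𝔻)` for some `m ≥ 2`. -/
def IsCuspAlgebra (A : Subalgebra ℂ (𝔻 → ℂ)) : Prop :=
  A ≤ HolDisk ∧ FiniteDimensional ℂ (OmodA A) ∧
    ∃ m, 2 ≤ m ∧ (zO m : Set (𝔻 → ℂ)) ⊆ (A : Set (𝔻 → ℂ))

/-- A simple cusp algebra: a cusp algebra of contact one. -/
def IsSimpleCuspAlgebra (A : Subalgebra ℂ (𝔻 → ℂ)) : Prop :=
  IsCuspAlgebra A ∧ con A = 1

/-- A primitive for a simple cusp algebra:  `π ∈ A` with `π(0) = 0`,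
`π'(0) = 0`, `π''(0) = 2`. -/
def IsPrimitive (A : Subalgebra ℂ (𝔻 → ℂ)) (π : 𝔻 → ℂ) : Prop :=
  π ∈ A ∧ π d0 = 0 ∧ der 1 0 π = 0 ∧ der 2 0 π = 2

/-- `A_n = A ∩ z^{2n} O(𝔻)`. -/
def An (A : Subalgebra ℂ (𝔻 → ℂ)) (n : ℕ) : Submodule ℂ (𝔻 → ℂ) :=
  A.toSubmodule ⊓ zO (2 * n)

/-- `E_n = A_n / A_{n+1}`. -/
abbrev En (A : Subalgebra ℂ (𝔻 → ℂ)) (n : ℕ) :=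
  An A n ⧸ ((An A (n + 1)).comap (An A n).subtype)

/-- `π_α(z) = z² + α₁ z³ + α₂ z⁵ + ⋯ + αₙ z^{2n+1}` (here `α i` is `α_{i+1}`). -/
def piA {n : ℕ} (α : Fin n → ℂ) : 𝔻 → ℂ := fun z =>
  (z : ℂ) ^ 2 + ∑ i : Fin n, α i * (z : ℂ) ^ (2 * (i : ℕ) + 3)

/-- `A(α₁,…,αₙ) = { p ∘ π_α + z^{2n+2} g : deg p ≤ n, g ∈ O(𝔻) }`. -/
def Aset {n : ℕ} (α : Fin n → ℂ) : Set (𝔻 → ℂ) :=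
  {f | ∃ p : Polynomial ℂ, ∃ g : 𝔻 → ℂ, p.natDegree ≤ n ∧ IsHolo g ∧
    ∀ z : 𝔻, f z = p.eval (piA α z) + (z : ℂ) ^ (2 * n + 2) * g z}

/-! ### Holomorphic functions on the disk -/

open Polynomial in
/-- The restriction of a polynomial to the disk. -/
def pe (Q : ℂ[X]) : 𝔻 → ℂ := fun z => Q.eval (z : ℂ)

lemma isHolo_pe (Q : Polynomial ℂ) : IsHolo (pe Q) :=
  ⟨fun z => Q.eval z, Q.differentiable.differentiableOn, fun _ => rfl⟩

lemma disk_mem_nhds : 𝔻 ∈ nhds (0 : ℂ) := Metric.ball_mem_nhds 0 one_pos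

lemma IsHolo.add {f g : 𝔻 → ℂ} (hf : IsHolo f) (hg : IsHolo g) : IsHolo (f + g) :=
  HolDisk.add_mem hf hg

lemma IsHolo.mul {f g : 𝔻 → ℂ} (hf : IsHolo f) (hg : IsHolo g) : IsHolo (f * g) :=
  HolDisk.mul_mem hf hg

/-- `der` may be computed from any holomorphic extension, not just the chosen one. -/
lemma der_eq {f : 𝔻 → ℂ} {F : ℂ → ℂ} (hF : DifferentiableOn ℂ F 𝔻) (h : ∀ z : 𝔻, f z = F z)
    (j : ℕ) : der j 0 f = iteratedDeriv j F 0 := by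
  have hf : IsHolo f := ⟨F, hF, h⟩
  unfold der
  rw [dif_pos hf]
  apply Filter.EventuallyEq.iteratedDeriv_eq
  filter_upwards [disk_mem_nhds] with z hz
  rw [← hf.choose_spec.2 ⟨z, hz⟩, ← h ⟨z, hz⟩]

/-- First-order Taylor expansion with holomorphic remainder. -/
lemma exists_eq_const_add {g : 𝔻 → ℂ} (hg : IsHolo g) :
    ∃ c : ℂ, ∃ h : 𝔻 → ℂ, IsHolo h ∧ ∀ z : 𝔻, g z = c + z * h z := by
  obtain ⟨G, hG, hgG⟩ := hg
  refine ⟨G 0, fun z => dslope G 0 z, ⟨dslope G 0, ?_, fun _ => rfl⟩, fun z => ?_⟩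
  · exact (Complex.differentiableOn_dslope disk_mem_nhds).2 hG
  · have := sub_smul_dslope G 0 (z : ℂ)
    simp only [sub_zero, smul_eq_mul] at this
    rw [this, hgG z]; ring

/-- Divisibility by `z^m` in `O(𝔻)` implies divisibility in the polynomial ring. -/
lemma X_pow_dvd_of_holo (m : ℕ) : ∀ (Q : Polynomial ℂ) (g : 𝔻 → ℂ), IsHolo g →
    (∀ z : 𝔻, Q.eval (z : ℂ) = (z : ℂ) ^ m * g z) → Polynomial.X ^ m ∣ Q := by
  induction m with
  | zero => intro Q g _ _; simp
  | succ m ih =>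
    intro Q g hg h
    have h0 : Q.eval 0 = 0 := by simpa [d0] using h d0
    obtain ⟨R, rfl⟩ : Polynomial.X ∣ Q := by
      rw [Polynomial.X_dvd_iff, Polynomial.coeff_zero_eq_eval_zero, h0]
    rw [pow_succ']
    refine mul_dvd_mul_left _ (ih R g hg ?_)
    have hne : ∀ z : 𝔻, (z : ℂ) ≠ 0 → R.eval (z : ℂ) = (z : ℂ) ^ m * g z := by
      intro z hz
      apply mul_left_cancel₀ hz
      have := h z
      rw [Polynomial.eval_mul, Polynomial.eval_X] at this
      rw [this]; ring
    intro z
    by_cases hz : (z : ℂ) = 0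
    · -- At the origin the factor `z` cannot be cancelled; the identity extends by continuity.
      obtain ⟨G, hG, hgG⟩ := hg
      have hGc : ContinuousAt (fun w : ℂ => w ^ m * G w) 0 :=
        (continuous_pow m).continuousAt.mul (hG.differentiableAt disk_mem_nhds).continuousAt
      have hRc : ContinuousAt (fun w : ℂ => R.eval w) 0 := R.continuous.continuousAt
      have heq : (fun w : ℂ => R.eval w) =ᶠ[nhdsWithin 0 {0}ᶜ] fun w : ℂ => w ^ m * G w := by
        filter_upwards [self_mem_nhdsWithin, mem_nhdsWithin_of_mem_nhds disk_mem_nhds]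
          with w hw hwD
        rw [hne ⟨w, hwD⟩ hw, hgG]
      have := tendsto_nhds_unique (hRc.tendsto.mono_left nhdsWithin_le_nhds)
        ((hGc.tendsto.mono_left nhdsWithin_le_nhds).congr' heq.symm)
      rw [hgG z, hz]
      exact this
    · exact hne z hz

/-! ### The polynomial `π_α` -/

open Polynomial in
/-- The cofactor `w` in `π_α = z² (1 + z w)`. -/
def wPoly {n : ℕ} (α : Fin n → ℂ) : ℂ[X] := ∑ i : Fin n, C (α i) * X ^ (2 * (i : ℕ))

open Polynomial in
/-- `π_α` as a polynomial. -/
def piPoly {n : ℕ} (α : Fin n → ℂ) : ℂ[X] := X ^ 2 * (1 + X * wPoly α)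

lemma piA_eq {n : ℕ} (α : Fin n → ℂ) (z : 𝔻) : piA α z = (piPoly α).eval (z : ℂ) := by
  simp only [piA, piPoly, wPoly, Polynomial.eval_mul, Polynomial.eval_pow, Polynomial.eval_X,
    Polynomial.eval_add, Polynomial.eval_finsetSum, Polynomial.eval_C,
    mul_add, Finset.mul_sum, mul_one]
  congr 1
  refine Finset.sum_congr rfl fun i _ => ?_
  ring

lemma piPoly_pow {n : ℕ} (α : Fin n → ℂ) (k : ℕ) :
    ∃ r : Polynomial ℂ, piPoly α ^ k
      = Polynomial.X ^ (2 * k) + Polynomial.X ^ (2 * k + 1) * r := by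
  obtain ⟨r, hr⟩ : Polynomial.X ∣ (1 + Polynomial.X * wPoly α) ^ k - 1 := by
    have := sub_dvd_pow_sub_pow (1 + Polynomial.X * wPoly α) 1 k
    rw [one_pow, add_sub_cancel_left] at this
    exact (Dvd.intro _ rfl).trans this
  refine ⟨r, ?_⟩
  rw [piPoly, mul_pow, sub_eq_iff_eq_add.1 hr]
  ring

/-- The odd polynomial `∑ cᵢ X^{2i+1}` of degree at most `2n+1`. -/
def oddPoly {n : ℕ} (c : Fin (n + 1) → ℂ) : Polynomial ℂ :=
  ∑ i, Polynomial.C (c i) * Polynomial.X ^ (2 * (i : ℕ) + 1)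

lemma coeff_oddPoly {n : ℕ} (c : Fin (n + 1) → ℂ) (d : ℕ) :
    (oddPoly c).coeff d = ∑ i : Fin (n + 1), if d = 2 * (i : ℕ) + 1 then c i else 0 := by
  simp [oddPoly, Polynomial.finsetSum_coeff, Polynomial.coeff_X_pow]

lemma coeff_oddPoly_even {n : ℕ} (c : Fin (n + 1) → ℂ) (k : ℕ) :
    (oddPoly c).coeff (2 * k) = 0 := by
  rw [coeff_oddPoly]
  exact Finset.sum_eq_zero fun i _ => if_neg (by omega)

lemma coeff_oddPoly_odd {n : ℕ} (c : Fin (n + 1) → ℂ) (i : Fin (n + 1)) :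
    (oddPoly c).coeff (2 * (i : ℕ) + 1) = c i := by
  rw [coeff_oddPoly, Finset.sum_eq_single i]
  · simp
  · intro j _ hj
    exact if_neg fun h => hj (Fin.ext (by omega))
  · simp

/-- An odd polynomial of degree at most `2n+1` that agrees with `p ∘ π_α` modulo `z^{2n+2}` is zero:
the coefficients of `z^{2j}` force `X^{n+1} ∣ p`. -/
lemma odd_sub_comp_eq_zero {n : ℕ} (α : Fin n → ℂ) (c : Fin (n + 1) → ℂ) (p : Polynomial ℂ)
    (h : Polynomial.X ^ (2 * n + 2) ∣ oddPoly c - p.comp (piPoly α)) : c = 0 := by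
  have hp : ∀ k, k ≤ n + 1 → Polynomial.X ^ k ∣ p := by
    intro k
    induction k with
    | zero => intro _; simp
    | succ k ih =>
      intro hk
      obtain ⟨q, rfl⟩ := ih (by omega)
      have hco := (Polynomial.X_pow_dvd_iff.1 h) (2 * k) (by omega)
      obtain ⟨r, hr⟩ := piPoly_pow α k
      rw [Polynomial.coeff_sub, coeff_oddPoly_even, zero_sub, neg_eq_zero, Polynomial.mul_comp,
        Polynomial.X_pow_comp, hr, pow_succ, mul_assoc, ← mul_one_add, mul_assoc,
        Polynomial.coeff_X_pow_mul', if_pos le_rfl, Nat.sub_self,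
        Polynomial.coeff_zero_eq_eval_zero] at hco
      have hq : q.eval 0 = 0 := by
        simpa [Polynomial.eval_comp, piPoly] using hco
      rw [pow_succ]
      refine mul_dvd_mul_left _ ?_
      rw [Polynomial.X_dvd_iff, Polynomial.coeff_zero_eq_eval_zero, hq]
  obtain ⟨q, rfl⟩ := hp (n + 1) le_rfl
  have h2 : Polynomial.X ^ (2 * n + 2) ∣
      (Polynomial.X ^ (n + 1) * q).comp (piPoly α) := by
    rw [Polynomial.mul_comp, Polynomial.X_pow_comp, piPoly, mul_pow, ← pow_mul, mul_assoc]
    exact Dvd.intro _ rfl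
  have h3 := (dvd_sub_left h2).1 h
  funext i
  rw [← coeff_oddPoly_odd c i]
  exact Polynomial.X_pow_dvd_iff.1 h3 _ (by have := i.2; omega)

/-! ### The algebra -/

/-- The algebra `A(α₁, …, αₙ)`, with no bound on the degree of `p`; see `coe_cuspAlg`. -/
def cuspAlg {n : ℕ} (α : Fin n → ℂ) : Subalgebra ℂ (𝔻 → ℂ) where
  carrier := {f | ∃ p : Polynomial ℂ, ∃ g : 𝔻 → ℂ, IsHolo g ∧
    f = pe (p.comp (piPoly α)) + zfun ^ (2 * n + 2) * g}
  add_mem' := by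
    rintro _ _ ⟨p, g, hg, rfl⟩ ⟨q, h, hh, rfl⟩
    refine ⟨p + q, g + h, hg.add hh, ?_⟩
    funext z
    simp only [pe, zfun, Pi.add_apply, Pi.mul_apply, Pi.pow_apply, Polynomial.add_comp,
      Polynomial.eval_add]
    ring
  mul_mem' := by
    rintro _ _ ⟨p, g, hg, rfl⟩ ⟨q, h, hh, rfl⟩
    refine ⟨p * q, pe (p.comp (piPoly α)) * h + pe (q.comp (piPoly α)) * g
      + pe (Polynomial.X ^ (2 * n + 2)) * (g * h),
      (((isHolo_pe _).mul hh).add ((isHolo_pe _).mul hg)).add ((isHolo_pe _).mul (hg.mul hh)), ?_⟩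
    funext z
    simp only [pe, zfun, Pi.add_apply, Pi.mul_apply, Pi.pow_apply, Polynomial.mul_comp,
      Polynomial.eval_mul, Polynomial.eval_pow, Polynomial.eval_X]
    ring
  algebraMap_mem' := fun c => ⟨Polynomial.C c, 0, HolDisk.zero_mem, by
    funext z
    simp [pe]⟩

lemma coe_cuspAlg {n : ℕ} (α : Fin n → ℂ) : (cuspAlg α : Set (𝔻 → ℂ)) = Aset α := by
  ext f
  constructor
  · rintro ⟨p, g, hg, rfl⟩
    -- Reduce `p` modulo `X^(n+1)`; the quotient contributes a multiple of `z^(2n+2)`.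
    obtain ⟨r, q, hr, rfl⟩ : ∃ r q : Polynomial ℂ, r.natDegree ≤ n ∧
        p = r + Polynomial.X ^ (n + 1) * q := by
      refine ⟨p %ₘ Polynomial.X ^ (n + 1), p /ₘ Polynomial.X ^ (n + 1), ?_,
        (Polynomial.modByMonic_add_div p _).symm⟩
      have := Polynomial.natDegree_modByMonic_lt p
        (Polynomial.monic_X_pow (R := ℂ) (n + 1)) (by
          intro h1
          have := congrArg Polynomial.natDegree h1
          simp at this)
      rw [Polynomial.natDegree_X_pow] at this
      omega
    refine ⟨r, pe ((1 + Polynomial.X * wPoly α) ^ (n + 1) * q.comp (piPoly α)) + g, hr,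
      (isHolo_pe _).add hg, fun z => ?_⟩
    have h1 : ((piPoly α).eval (z : ℂ)) ^ (n + 1)
        = (z : ℂ) ^ (2 * n + 2) * (1 + z * (wPoly α).eval (z : ℂ)) ^ (n + 1) := by
      rw [piPoly, Polynomial.eval_mul, mul_pow, Polynomial.eval_pow, ← pow_mul]
      simp [mul_add]
    simp only [pe, zfun, Pi.add_apply, Pi.mul_apply, Pi.pow_apply, piA_eq,
      Polynomial.eval_comp, Polynomial.eval_add, Polynomial.eval_mul, Polynomial.eval_pow,
      Polynomial.eval_X, Polynomial.eval_one, h1]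
    ring
  · rintro ⟨p, g, -, hg, h⟩
    refine ⟨p, g, hg, ?_⟩
    funext z
    rw [h z, piA_eq]
    simp [pe, zfun, Polynomial.eval_comp]

lemma cuspAlg_le {n : ℕ} (α : Fin n → ℂ) : cuspAlg α ≤ HolDisk := by
  rintro f ⟨p, g, hg, rfl⟩
  have : zfun ^ (2 * n + 2) = pe (Polynomial.X ^ (2 * n + 2)) := by
    funext z; simp [pe, zfun]
  rw [this]
  exact (isHolo_pe _).add ((isHolo_pe _).mul hg)

lemma zO_le_cuspAlg {n : ℕ} (α : Fin n → ℂ) :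
    (zO (2 * n + 2) : Set (𝔻 → ℂ)) ⊆ (cuspAlg α : Set (𝔻 → ℂ)) := by
  rintro f ⟨g, hg, rfl⟩
  exact ⟨0, g, hg, by funext z; simp [pe]⟩

lemma pe_comp_mem {n : ℕ} (α : Fin n → ℂ) (p : Polynomial ℂ) :
    pe (p.comp (piPoly α)) ∈ cuspAlg α :=
  ⟨p, 0, HolDisk.zero_mem, by simp⟩

lemma piA_mem {n : ℕ} (α : Fin n → ℂ) : piA α ∈ cuspAlg α := by
  have : piA α = pe (Polynomial.X.comp (piPoly α)) := by
    funext z; simp [pe, piA_eq]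
  rw [this]
  exact pe_comp_mem α _

/-! ### Derivatives at the origin -/

lemma der_one_eq_zero {n : ℕ} (α : Fin n → ℂ) {f : 𝔻 → ℂ} (hf : f ∈ cuspAlg α) :
    der 1 0 f = 0 := by
  obtain ⟨p, g, ⟨G, hG, hgG⟩, rfl⟩ := hf
  rw [der_eq (F := fun z => (p.comp (piPoly α)).eval z + z ^ (2 * n + 2) * G z) (by
    exact (Polynomial.differentiable _).differentiableOn.add
      ((differentiable_pow _).differentiableOn.mul hG))
    (by intro z; simp [pe, zfun, hgG z]), iteratedDeriv_one]
  have h1 := (p.comp (piPoly α)).hasDerivAt 0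
  have h2 := ((hasDerivAt_pow (2 * n + 2) (0 : ℂ)).mul
    (hG.differentiableAt disk_mem_nhds).hasDerivAt)
  refine (h1.add h2).deriv.trans ?_
  simp [Polynomial.derivative_comp, piPoly]

lemma der_two_piA {n : ℕ} (α : Fin n → ℂ) : der 2 0 (piA α) = 2 := by
  rw [der_eq (F := fun z => (piPoly α).eval z) (Polynomial.differentiable _).differentiableOn
    (piA_eq α), iteratedDeriv_succ, iteratedDeriv_one]
  have : deriv (fun z => (piPoly α).eval z) = fun z => (piPoly α).derivative.eval z := by
    funext z; exact Polynomial.deriv _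
  rw [this, Polynomial.deriv]
  simp [piPoly, one_add_one_eq_two]

lemma con_cuspAlg {n : ℕ} (α : Fin n → ℂ) : con (cuspAlg α) = 1 := by
  have : {m : ℕ | ∀ f ∈ cuspAlg α, ∀ j, 1 ≤ j → j ≤ m → der j 0 f = 0} = Set.Iic 1 := by
    ext m
    simp only [Set.mem_ofPred_eq, Set.mem_Iic]
    constructor
    · intro h
      by_contra! hm
      have := h _ (piA_mem α) 2 (by norm_num) hm
      rw [der_two_piA] at this
      norm_num at this
    · intro hm f hf j h1 h2
      obtain rfl : j = 1 := by omega
      exact der_one_eq_zero α hf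
  rw [con, this, csSup_Iic]

/-! ### Codimension -/

/-- Every element of `z^k O(𝔻)`, `k ≤ 2n+2`, lies in `A` plus the span of the odd monomials. -/
lemma zO_subset_sup {n : ℕ} (α : Fin n → ℂ) (j : ℕ) : ∀ k, k + j = 2 * n + 2 →
    ∀ f ∈ zO k, ∃ c : Fin (n + 1) → ℂ, f - pe (oddPoly c) ∈ cuspAlg α := by
  induction j with
  | zero =>
    rintro k rfl f hf
    refine ⟨0, ?_⟩
    have : pe (oddPoly (0 : Fin (n + 1) → ℂ)) = 0 := by funext z; simp [pe, oddPoly]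
    rw [this, sub_zero]
    exact zO_le_cuspAlg α hf
  | succ j ih =>
    rintro k hk f ⟨g, hg, rfl⟩
    obtain ⟨a, h, hh, hgh⟩ := exists_eq_const_add hg
    obtain ⟨l, rfl | rfl⟩ := Nat.even_or_odd' k
    · obtain ⟨r, hr⟩ := piPoly_pow α l
      -- `z^{2l} g = a π^l + z^{2l+1} (h - a r)`, where `π^l = z^{2l} + z^{2l+1} r`.
      obtain ⟨c, hc⟩ := ih (2 * l + 1) (by omega) (zfun ^ (2 * l + 1) * (h + pe (-a • r)))
        ⟨_, hh.add (isHolo_pe _), rfl⟩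
      refine ⟨c, ?_⟩
      have key := (cuspAlg α).add_mem hc
        (pe_comp_mem α (Polynomial.C a * Polynomial.X ^ l))
      convert key using 1
      rw [Polynomial.mul_comp, Polynomial.X_pow_comp, Polynomial.C_comp, hr]
      funext z
      simp only [pe, zfun, Pi.add_apply, Pi.mul_apply, Pi.pow_apply, Pi.sub_apply, hgh z,
        Polynomial.eval_mul, Polynomial.eval_add, Polynomial.eval_pow, Polynomial.eval_X,
        Polynomial.eval_C, Polynomial.eval_smul, smul_eq_mul]
      ring
    · obtain ⟨c, hc⟩ := ih (2 * l + 1 + 1) (by omega) (zfun ^ (2 * l + 1 + 1) * h) ⟨_, hh, rfl⟩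
      refine ⟨c + Pi.single ⟨l, by omega⟩ a, ?_⟩
      convert hc using 1
      have hs : oddPoly (c + Pi.single (⟨l, by omega⟩ : Fin (n + 1)) a)
          = oddPoly c + Polynomial.C a * Polynomial.X ^ (2 * l + 1) := by
        simp only [oddPoly, Pi.add_apply, Polynomial.C_add, add_mul, Finset.sum_add_distrib]
        congr 1
        rw [Finset.sum_eq_single (⟨l, by omega⟩ : Fin (n + 1))]
        · simp
        · intro i _ hi
          simp [Pi.single_eq_of_ne hi]
        · simp
      rw [hs]
      funext z
      simp only [pe, zfun, Pi.mul_apply, Pi.pow_apply, Pi.sub_apply, hgh z,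
        Polynomial.eval_mul, Polynomial.eval_add, Polynomial.eval_pow, Polynomial.eval_X,
        Polynomial.eval_C]
      ring

/-- The map sending coordinates `c` to the function `∑ cᵢ z^{2i+1}` in `O(𝔻)`. -/
def oddMap (n : ℕ) : (Fin (n + 1) → ℂ) →ₗ[ℂ] HolDisk.toSubmodule where
  toFun c := ⟨pe (oddPoly c), isHolo_pe _⟩
  map_add' c d := by
    ext z
    simp [pe, oddPoly, add_mul, Finset.sum_add_distrib]
  map_smul' a c := by
    ext z
    simp [pe, oddPoly, Polynomial.eval_finsetSum, Finset.mul_sum, mul_assoc]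

/-- The coordinates on `O(𝔻)/A` given by the classes of `z, z³, …, z^{2n+1}`, which form a basis. -/
def oddEquiv {n : ℕ} (α : Fin n → ℂ) : (Fin (n + 1) → ℂ) ≃ₗ[ℂ] OmodA (cuspAlg α) :=
  LinearEquiv.ofBijective ((Submodule.mkQ _).comp (oddMap n)) (by
    constructor
    · rw [injective_iff_map_eq_zero]
      intro c hc
      rw [LinearMap.comp_apply, Submodule.mkQ_apply, Submodule.Quotient.mk_eq_zero] at hc
      obtain ⟨p, g, hg, h⟩ : pe (oddPoly c) ∈ cuspAlg α := hc
      refine odd_sub_comp_eq_zero α c p (X_pow_dvd_of_holo _ _ g hg fun z => ?_)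
      have := congrFun h z
      simp only [pe, zfun, Pi.add_apply, Pi.mul_apply, Pi.pow_apply] at this
      rw [Polynomial.eval_sub, this]
      ring
    · intro x
      obtain ⟨⟨f, hf⟩, rfl⟩ := Submodule.mkQ_surjective _ x
      obtain ⟨c, hc⟩ := zO_subset_sup α (2 * n + 2) 0 (by omega) f ⟨f, hf, by simp⟩
      refine ⟨c, ?_⟩
      rw [LinearMap.comp_apply, Submodule.mkQ_apply, Submodule.mkQ_apply, eq_comm,
        Submodule.Quotient.eq]
      exact hc)

/-- `A(α₁,…,αₙ)` is a simple cusp algebra of codimension `n + 1` containing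
`z^{2n+2} O(𝔻)`, and `π_α` is a primitive for it. -/
theorem stmt_12 (n : ℕ) (hn : 1 ≤ n) (α : Fin n → ℂ) :
    ∃ B : Subalgebra ℂ (𝔻 → ℂ), (B : Set (𝔻 → ℂ)) = Aset α ∧
      IsSimpleCuspAlgebra B ∧ cod B = n + 1 ∧
      (zO (2 * n + 2) : Set (𝔻 → ℂ)) ⊆ (B : Set (𝔻 → ℂ)) ∧
      IsPrimitive B (piA α) := by
  refine ⟨cuspAlg α, coe_cuspAlg α, ⟨⟨cuspAlg_le α, ?_, 2 * n + 2, by omega, zO_le_cuspAlg α⟩,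
    con_cuspAlg α⟩, ?_, zO_le_cuspAlg α, piA_mem α, ?_, der_one_eq_zero α (piA_mem α),
    der_two_piA α⟩
  · exact Module.Finite.equiv (oddEquiv α)
  · rw [cod, ← (oddEquiv α).finrank_eq, Module.finrank_fin_fun]
  · simp [piA, d0]

end
end

section
/- Let A be a simple cusp algebra. For every α ∈ 𝔻 with α ≠ 0, there exists a function ψ_α ∈ A of the form ψ_α(z) = (z − α) e^{q(z)} with q a polynomial; in particular ψ_α has a simple zero at α (ψ_α(α) = 0, ψ_α'(α) ≠ 0) and ψ_α(z) ≠ 0 for every z ∈ 𝔻 with z ≠ α. -/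
/-!
The algebra `A` contains the constants and `z^m O(𝔻)` for some `m`, so it is enough to find a
polynomial `q` with `(z - α) e^{q(z)} = -α + z^m g(z)` and `g` entire. Such a `q` is a truncation
of the Taylor series of `-log (1 - z/α)` at `0`. It is built here one degree at a time in
`exists_polynomial_exp`: multiplying by `exp (a z^n)`, with `a` chosen suitably, cancels the
coefficient of `z^n` in the error term.
-/

open scoped Classical

noncomputable section

lemma exists_entire_factor {f : ℂ → ℂ} (hf : Differentiable ℂ f) :
    ∃ g : ℂ → ℂ, Differentiable ℂ g ∧ ∀ z, f z = f 0 + z * g z := by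
  refine ⟨dslope f 0, ?_, fun z => ?_⟩
  · rw [← differentiableOn_univ] at hf ⊢
    exact (Complex.differentiableOn_dslope Filter.univ_mem).2 hf
  · have h := sub_smul_dslope f 0 z
    simp only [sub_zero, smul_eq_mul] at h
    rw [h]; ring

/-- For every `n` some polynomial `q` agrees with a branch of `-log (1 - z/α)` near `0` up to
order `n`, phrased without logarithms. -/
lemma exists_polynomial_exp (α : ℂ) (hα : α ≠ 0) (n : ℕ) :
    ∃ (q : Polynomial ℂ) (g : ℂ → ℂ), Differentiable ℂ g ∧
      ∀ z, (z - α) * Complex.exp (q.eval z) = -α + z ^ (n + 1) * g z := by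
  induction n with
  | zero => exact ⟨0, fun _ => 1, differentiable_const 1, fun z => by simp; ring⟩
  | succ n ih =>
    obtain ⟨q, g, hg, h⟩ := ih
    obtain ⟨E, hE, hexp⟩ := exists_entire_factor Complex.differentiable_exp
    have hE0 : E 0 = 1 := by
      -- `E 0` is the derivative of `exp` at `0`: differentiate `exp w = exp 0 + w * E w`.
      have h1 : HasDerivAt (fun w => Complex.exp 0 + w * E w) (E 0) 0 := by
        simpa using ((hasDerivAt_id (0 : ℂ)).mul (hE 0).hasDerivAt).const_add (Complex.exp 0)
      have h2 := Complex.hasDerivAt_exp 0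
      rw [show Complex.exp = fun w => Complex.exp 0 + w * E w from funext hexp] at h2
      simpa using h1.unique h2
    -- The value of `a` that makes the new error term vanish at `0`.
    let a : ℂ := g 0 / α
    obtain ⟨k, hk, hk'⟩ := exists_entire_factor
      (f := fun z => g z - α * a * E (a * z ^ (n + 1))
        + g z * a * z ^ (n + 1) * E (a * z ^ (n + 1))) (by fun_prop)
    refine ⟨q + Polynomial.C a * Polynomial.X ^ (n + 1), k, hk, fun z => ?_⟩
    have h0 : α * a = g 0 := mul_div_cancel₀ _ hα
    have hz := hk' z
    simp only [ne_eq, Nat.add_eq_zero_iff, one_ne_zero, and_false, not_false_eq_true, zero_pow,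
      mul_zero, hE0, h0, mul_one, add_zero, sub_self, zero_add] at hz
    have he := hexp (a * z ^ (n + 1))
    rw [Complex.exp_zero] at he
    simp only [Polynomial.eval_add, Polynomial.eval_mul, Polynomial.eval_C, Polynomial.eval_pow,
      Polynomial.eval_X]
    rw [Complex.exp_add, ← mul_assoc, h z, he]
    linear_combination z ^ (n + 1) * hz - z ^ (n + 1) * E (a * z ^ (n + 1)) * h0

/-- For every `α ∈ 𝔻 \ {0}` there is `ψ_α ∈ A` of the form
`ψ_α(z) = (z - α) e^{q(z)}`, `q` a polynomial; in particular `ψ_α(α) = 0`,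
`ψ_α'(α) ≠ 0`, and `ψ_α(z) ≠ 0` for `z ∈ 𝔻 \ {α}`. -/
theorem stmt_14 (A : Subalgebra ℂ (𝔻 → ℂ)) (hA : IsSimpleCuspAlgebra A)
    (α : 𝔻) (hα : α ≠ d0) :
    ∃ q : Polynomial ℂ,
      ((fun z : 𝔻 => ((z : ℂ) - (α : ℂ)) * Complex.exp (q.eval (z : ℂ))) ∈ A) ∧
      ((α : ℂ) - (α : ℂ)) * Complex.exp (q.eval (α : ℂ)) = 0 ∧
      deriv (fun w : ℂ => (w - (α : ℂ)) * Complex.exp (q.eval w)) (α : ℂ) ≠ 0 ∧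
      ∀ z : 𝔻, z ≠ α → ((z : ℂ) - (α : ℂ)) * Complex.exp (q.eval (z : ℂ)) ≠ 0 := by
  obtain ⟨⟨-, -, m, hm, hmA⟩, -⟩ := hA
  have hα0 : (α : ℂ) ≠ 0 := fun h => hα (Subtype.ext h)
  obtain ⟨n, rfl⟩ : ∃ n, m = n + 1 := ⟨m - 1, by omega⟩
  obtain ⟨q, g, hg, h⟩ := exists_polynomial_exp α hα0 n
  refine ⟨q, ?_, by simp, ?_, fun z hz => ?_⟩
  · have h1 : (zfun ^ (n + 1) * fun z : 𝔻 => g z) ∈ A :=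
      hmA ⟨_, ⟨g, hg.differentiableOn, fun _ => rfl⟩, rfl⟩
    convert add_mem (A.algebraMap_mem (-(α : ℂ))) h1 using 1
    ext z
    simpa [zfun] using h z
  · have hd : HasDerivAt (fun w : ℂ => Complex.exp (q.eval w)) _ (α : ℂ) :=
      (q.hasDerivAt (α : ℂ)).cexp
    have h2 : HasDerivAt (fun w : ℂ => (w - (α : ℂ)) * Complex.exp (q.eval w)) _ (α : ℂ) :=
      ((hasDerivAt_id (α : ℂ)).sub_const (α : ℂ)).mul hd
    have h3 : deriv (fun w : ℂ => (w - (α : ℂ)) * Complex.exp (q.eval w)) (α : ℂ) =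
        Complex.exp (q.eval (α : ℂ)) := by
      simpa using h2.deriv
    rw [h3]
    exact Complex.exp_ne_zero _
  · exact mul_ne_zero (sub_ne_zero.2 fun e => hz (Subtype.ext e)) (Complex.exp_ne_zero _)

end
end

section
/- Let A be a unital subalgebra of O(𝔻) such that the complex vector space O(𝔻)/A is finite-dimensional. If f ∈ A and f(z) ≠ 0 for every z ∈ 𝔻, then the function 1/f belongs to A. -/
/-!
Multiplication by `f` maps `A` into itself and is bijective on `O(𝔻)`, with inverse multiplication
by the holomorphic function `1/f`. It therefore induces a surjective endomorphism of the
finite-dimensional space `O(𝔻)/A`, which must be injective; as `f * (1/f) = 1 ∈ A`, the class of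
`1/f` is zero.
-/

open scoped Classical

noncomputable section

/-- If `f ∈ A` has an inverse `g` in `O(𝔻)` and `A` has finite codimension, then `g ∈ A`:
multiplication by `f` descends to a surjective, hence injective, endomorphism of `O(𝔻)/A`,
and it kills the class of `g`. -/
lemma mem_of_mul_eq_one_of_finite (A : Subalgebra ℂ (𝔻 → ℂ)) (hle : A ≤ HolDisk)
    (hfin : FiniteDimensional ℂ (OmodA A)) {f g : 𝔻 → ℂ} (hf : f ∈ A) (hg : g ∈ HolDisk)
    (hfg : f * g = 1) : g ∈ A := by
  let M := HolDisk.toSubmodule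
  let N : Submodule ℂ M := A.toSubmodule.comap M.subtype
  let T : M →ₗ[ℂ] M := (LinearMap.mulLeft ℂ f).restrict
    (fun x hx => HolDisk.mul_mem (hle hf) hx)
  have hT : N ≤ N.comap T := fun x hx => A.mul_mem hf hx
  let φ : (M ⧸ N) →ₗ[ℂ] (M ⧸ N) := N.mapQ N T hT
  have hsurj : Function.Surjective φ := by
    intro y
    obtain ⟨y, rfl⟩ := N.mkQ_surjective y
    refine ⟨N.mkQ ⟨g * y, HolDisk.mul_mem hg y.2⟩, congrArg N.mkQ (Subtype.ext ?_)⟩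
    change f * (g * (y : 𝔻 → ℂ)) = y
    rw [← mul_assoc, hfg, one_mul]
  have : FiniteDimensional ℂ (M ⧸ N) := hfin
  have hinj : Function.Injective φ := LinearMap.injective_iff_surjective.mpr hsurj
  have h0 : φ (N.mkQ ⟨g, hg⟩) = 0 := by
    refine (Submodule.Quotient.mk_eq_zero N).mpr ?_
    change f * g ∈ A
    rw [hfg]
    exact A.one_mem
  exact (Submodule.Quotient.mk_eq_zero N).mp (hinj (h0.trans (map_zero φ).symm))

/-- If `A` is a unital subalgebra of `O(𝔻)` of finite codimension and `f ∈ A`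
has no zeros on `𝔻`, then `1/f ∈ A`. -/
theorem stmt_15 (A : Subalgebra ℂ (𝔻 → ℂ)) (hle : A ≤ HolDisk)
    (hfin : FiniteDimensional ℂ (OmodA A))
    (f : 𝔻 → ℂ) (hf : f ∈ A) (hne : ∀ z : 𝔻, f z ≠ 0) :
    (fun z => (f z)⁻¹) ∈ A := by
  obtain ⟨F, hF, hfF⟩ := hle hf
  refine mem_of_mul_eq_one_of_finite A hle hfin hf
    ⟨fun z => (F z)⁻¹, hF.fun_inv fun z hz => ?_, fun z => congrArg (·⁻¹) (hfF z)⟩ ?_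
  · rw [← hfF ⟨z, hz⟩]
    exact hne ⟨z, hz⟩
  · ext z
    exact mul_inv_cancel₀ (hne z)

end
end

section
/- Let A be a simple cusp algebra, let α ∈ 𝔻 with α ≠ 0, and let ψ ∈ A be a function with a simple zero at α and no other zeros in 𝔻 (ψ(α) = 0, ψ'(α) ≠ 0, and ψ(z) ≠ 0 for z ∈ 𝔻 ∖ {α}). If f ∈ A and f(α) = 0, then the holomorphic function g ∈ O(𝔻) determined by f = ψ · g belongs to A. -/
/-!
Since `α ≠ 0`, the constant `c = ψ(0)` is nonzero, so `u = 1 - ψ/c` lies in `A` and vanishes at `0`.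
The truncated Neumann series `p = c⁻¹ ∑_{k < m} u^k` lies in `A` and satisfies `ψ p = 1 - u^m`.
Multiplying by `g` gives `g = f p + u^m g`, where `u^m g ∈ z^m O(𝔻) ⊆ A` for `m` large.
-/

open scoped Classical

noncomputable section

lemma exists_eq_zfun_mul {u : 𝔻 → ℂ} (hu : IsHolo u) (h0 : u d0 = 0) :
    ∃ v, IsHolo v ∧ u = zfun * v := by
  obtain ⟨F, hF, hFu⟩ := hu
  have hF0 : F 0 = 0 := (hFu d0).symm.trans h0
  refine ⟨fun z => dslope F 0 z, ⟨dslope F 0, ?_, fun _ => rfl⟩, ?_⟩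
  · exact (Complex.differentiableOn_dslope (Metric.ball_mem_nhds 0 one_pos)).2 hF
  · ext z
    have h := sub_smul_dslope F 0 (z : ℂ)
    simp only [sub_zero, hF0, smul_eq_mul] at h
    simp only [hFu, Pi.mul_apply, zfun, h]

/-- If `ψ ∈ A` has a simple zero at `α ≠ 0` and no other zeros on `𝔻`, and
`f ∈ A` vanishes at `α`, then the holomorphic `g` with `f = ψ · g` lies in `A`. -/
theorem stmt_16 (A : Subalgebra ℂ (𝔻 → ℂ)) (hA : IsSimpleCuspAlgebra A)
    (α : 𝔻) (hα : α ≠ d0) (ψ : 𝔻 → ℂ) (hψA : ψ ∈ A)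
    (hψα : ψ α = 0) (hψ' : der 1 (α : ℂ) ψ ≠ 0)
    (hψne : ∀ z : 𝔻, z ≠ α → ψ z ≠ 0)
    (f : 𝔻 → ℂ) (hf : f ∈ A) (hfα : f α = 0)
    (g : 𝔻 → ℂ) (hg : IsHolo g) (hfg : ∀ z : 𝔻, f z = ψ z * g z) :
    g ∈ A := by
  obtain ⟨⟨hAle, -, m, -, hm⟩, -⟩ := hA
  have hc : ψ d0 ≠ 0 := hψne d0 (Ne.symm hα)
  set c := ψ d0
  set u : 𝔻 → ℂ := 1 - c⁻¹ • ψ with hu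
  have huA : u ∈ A := A.sub_mem A.one_mem (A.smul_mem hψA _)
  have hu0 : u d0 = 0 := by
    change 1 - c⁻¹ * c = 0
    rw [inv_mul_cancel₀ hc, sub_self]
  obtain ⟨v, hv, huv⟩ := exists_eq_zfun_mul (hAle huA) hu0
  have hrem : u ^ m * g ∈ A := by
    refine hm ⟨v ^ m * g, ?_, ?_⟩
    · exact HolDisk.mul_mem (HolDisk.pow_mem (show v ∈ HolDisk from hv) m) hg
    · rw [huv]; ring
  have hpA : c⁻¹ • ∑ k ∈ Finset.range m, u ^ k ∈ A :=
    A.smul_mem (A.sum_mem fun k _ => A.pow_mem huA k) _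
  have key : g = f * (c⁻¹ • ∑ k ∈ Finset.range m, u ^ k) + u ^ m * g := by
    have hgeom := mul_neg_geom_sum u m
    have h1 : (1 : 𝔻 → ℂ) - u = c⁻¹ • ψ := by rw [hu, sub_sub_cancel]
    have hf' : f = ψ * g := funext hfg
    rw [h1, smul_mul_assoc] at hgeom
    rw [hf', mul_right_comm, mul_smul_comm, hgeom]
    ring
  rw [key]
  exact A.add_mem (A.mul_mem hf hpA) hrem

end
end

section
/- Every simple cusp algebra A has a primitive h₁ that has no zeros in 𝔻 ∖ {0} (i.e., h₁ ∈ A, h₁(0) = 0, h₁'(0) = 0, h₁''(0) = 2, and h₁(z) ≠ 0 for all z ∈ 𝔻 with z ≠ 0). -/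
/-!
Contact one means that every `f ∈ A` has `f'(0) = 0`, while some `f ∈ A` has `f''(0) ≠ 0`.
Subtracting a constant and rescaling, some `f = z² U` lies in `A`, with `U` holomorphic and
`U(0) = 1`. The germ of `U` at `0` has a logarithm; truncating its Taylor series at order `m`
gives an entire `p` with `p(0) = 0` and `U - exp p` divisible by `z ^ (m + 1)`
(`exists_exp_approx`, where the coefficients of `p` are constructed recursively, so that no
logarithm is needed). Then `h = z² exp p` has no zero off the origin, and `f - h` lies in
`z^m O(𝔻) ⊆ A` for `m` large, so `h ∈ A`.
-/

open scoped Classical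

noncomputable section

lemma isOpen_disk : IsOpen 𝔻 := Metric.isOpen_ball

/-- Division by `z` of a holomorphic function vanishing at the origin. -/
lemma exists_div {F : ℂ → ℂ} (hF : DifferentiableOn ℂ F 𝔻) (h0 : F 0 = 0) :
    ∃ G : ℂ → ℂ, DifferentiableOn ℂ G 𝔻 ∧ G 0 = deriv F 0 ∧ ∀ z, F z = z * G z := by
  refine ⟨dslope F 0, (Complex.differentiableOn_dslope disk_mem_nhds).2 hF, dslope_same _ _, ?_⟩
  intro z
  simpa [h0] using (sub_smul_dslope F 0 z).symm

lemma hasDerivAt_mul_id {K : ℂ → ℂ} {z : ℂ} (hK : DifferentiableOn ℂ K 𝔻) (hz : z ∈ 𝔻) :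
    HasDerivAt (fun w => w * K w) (K z + z * deriv K z) z := by
  have := (hasDerivAt_id z).mul (hK.differentiableAt (isOpen_disk.mem_nhds hz)).hasDerivAt
  simpa [Function.comp_def, Pi.mul_def] using this

lemma der_two_eq {f : 𝔻 → ℂ} {U : ℂ → ℂ} (c : ℂ) (hU : DifferentiableOn ℂ U 𝔻)
    (h : ∀ z : 𝔻, f z = c + (z : ℂ) ^ 2 * U z) : der 2 0 f = 2 * U 0 := by
  have hzU : DifferentiableOn ℂ (fun z => z * U z) 𝔻 := differentiableOn_id.mul hU
  have hF : DifferentiableOn ℂ (fun z => c + z * (z * U z)) 𝔻 :=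
    (differentiableOn_const c).add (differentiableOn_id.mul hzU)
  rw [der_eq hF (fun z => by rw [h z]; ring), iteratedDeriv_succ, iteratedDeriv_one]
  -- the first derivative is again divisible by `z`, with quotient `K`
  let K : ℂ → ℂ := fun z => U z + deriv (fun w => w * U w) z
  have hK : DifferentiableOn ℂ K 𝔻 := hU.add (hzU.deriv isOpen_disk)
  have h1 : deriv (fun z => c + z * (z * U z)) =ᶠ[nhds 0] fun z => z * K z := by
    filter_upwards [disk_mem_nhds] with z hz
    rw [((hasDerivAt_mul_id hzU hz).const_add c).deriv]
    simp only [K]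
    ring
  rw [h1.deriv_eq, (hasDerivAt_mul_id hK zero_mem_disk).deriv]
  simp only [K, (hasDerivAt_mul_id hU zero_mem_disk).deriv]
  ring

lemma exists_eq_add_sq_mul {f : 𝔻 → ℂ} (hf : IsHolo f) (h1 : der 1 0 f = 0) :
    ∃ U : ℂ → ℂ, DifferentiableOn ℂ U 𝔻 ∧ ∀ z : 𝔻, f z = f d0 + (z : ℂ) ^ 2 * U z := by
  obtain ⟨F, hF, hfF⟩ := hf
  rw [der_eq hF hfF, iteratedDeriv_one] at h1
  obtain ⟨G, hG, hG0, hFG⟩ := exists_div (F := fun z => F z - F 0)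
    (hF.sub (differentiableOn_const _)) (sub_self _)
  rw [deriv_sub_const, h1] at hG0
  obtain ⟨U, hU, -, hGU⟩ := exists_div hG hG0
  refine ⟨U, hU, fun z => ?_⟩
  have := hFG z
  rw [hGU z] at this
  rw [hfF z, hfF d0, show ((d0 : 𝔻) : ℂ) = 0 from rfl]
  linear_combination this

/-- Truncated logarithm: a holomorphic `U` with `U(0) = 1` agrees to any finite order at `0` with
the exponential of an entire function. -/
lemma exists_exp_approx {U : ℂ → ℂ} (hU : DifferentiableOn ℂ U 𝔻) (h0 : U 0 = 1) (n : ℕ) :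
    ∃ p G : ℂ → ℂ, Differentiable ℂ p ∧ p 0 = 0 ∧ DifferentiableOn ℂ G 𝔻 ∧
      ∀ z, U z = Complex.exp (p z) + z ^ (n + 1) * G z := by
  induction n with
  | zero =>
    obtain ⟨G, hG, -, hUG⟩ := exists_div (F := fun z => U z - 1)
      (hU.sub (differentiableOn_const _)) (by simp [h0])
    exact ⟨fun _ => 0, G, differentiable_const _, rfl, hG, fun z => by
      have := hUG z
      simp only [Complex.exp_zero]
      linear_combination this⟩
  | succ n ih =>
    obtain ⟨p, G, hp, hp0, hG, hUG⟩ := ih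
    -- `E w = (exp w - 1) / w`, an entire function with `E 0 = 1`
    let E : ℂ → ℂ := dslope Complex.exp 0
    have hE : Differentiable ℂ E := differentiableOn_univ.1
      ((Complex.differentiableOn_dslope Filter.univ_mem).2 Complex.differentiable_exp.differentiableOn)
    have hE0 : E 0 = 1 := by simp [E, dslope_same]
    have hEexp : ∀ w, Complex.exp w = 1 + w * E w := fun w => by
      have := sub_smul_dslope Complex.exp 0 w
      simp only [sub_zero, smul_eq_mul, Complex.exp_zero] at this
      linear_combination -this
    -- the next Taylor coefficient of the logarithm of `U` is the leading coefficient of the error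
    let c := G 0
    have hq : Differentiable ℂ (fun z : ℂ => c * z ^ (n + 1)) := by fun_prop
    have hR : Differentiable ℂ (fun z : ℂ => Complex.exp (p z) * (c * E (c * z ^ (n + 1)))) :=
      hp.cexp.mul ((hE.comp hq).const_mul c)
    obtain ⟨G', hG', -, hGG'⟩ := exists_div
      (F := fun z => G z - Complex.exp (p z) * (c * E (c * z ^ (n + 1))))
      (hG.sub hR.differentiableOn) (by simp [hp0, hE0, c])
    refine ⟨fun z => p z + c * z ^ (n + 1), G', hp.add hq, by simp [hp0], hG', fun z => ?_⟩
    have h2 := hGG' z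
    rw [Complex.exp_add, hEexp (c * z ^ (n + 1)), hUG z]
    linear_combination z ^ (n + 1) * h2

/-- Every simple cusp algebra has a primitive with no zeros in `𝔻 \ {0}`. -/
theorem stmt_17 (A : Subalgebra ℂ (𝔻 → ℂ)) (hA : IsSimpleCuspAlgebra A) :
    ∃ h₁ : 𝔻 → ℂ, IsPrimitive A h₁ ∧ ∀ z : 𝔻, z ≠ d0 → h₁ z ≠ 0 := by
  obtain ⟨⟨hle, -, m, -, hm⟩, hcon⟩ := hA
  set S : Set ℕ := {n : ℕ | ∀ f ∈ A, ∀ j, 1 ≤ j → j ≤ n → der j 0 f = 0} with hS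
  have hcon' : sSup S = 1 := hcon
  -- an unbounded set of naturals would have the junk supremum `0`
  have hbdd : BddAbove S := by
    by_contra hb
    rw [Nat.sSup_of_not_bddAbove hb] at hcon'
    exact zero_ne_one hcon'
  have h1S : 1 ∈ S := by
    have hne : S.Nonempty := ⟨0, fun f _ j h1 h2 => by omega⟩
    exact hcon' ▸ Nat.sSup_mem hne hbdd
  have h2S : 2 ∉ S := fun h => by
    have := le_csSup hbdd h
    omega
  have hd1 : ∀ f ∈ A, der 1 0 f = 0 := fun f hf => h1S f hf 1 le_rfl le_rfl
  obtain ⟨f, hfA, hf2⟩ : ∃ f ∈ A, der 2 0 f ≠ 0 := by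
    by_contra! hcontra
    refine h2S fun f hf j hj1 hj2 => ?_
    interval_cases j
    exacts [hd1 f hf, hcontra f hf]
  obtain ⟨U, hU, hfU⟩ := exists_eq_add_sq_mul (hle hfA) (hd1 f hfA)
  rw [der_two_eq _ hU hfU] at hf2
  have hU0 : U 0 ≠ 0 := fun h => hf2 (by rw [h, mul_zero])
  obtain ⟨p, G, hp, hp0, hG, hpG⟩ := exists_exp_approx (U := fun z => (U 0)⁻¹ * U z)
    (hU.const_mul _) (inv_mul_cancel₀ hU0) m
  let h : 𝔻 → ℂ := fun z => (z : ℂ) ^ 2 * Complex.exp (p z)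
  let r : 𝔻 → ℂ := zfun ^ m * fun z : 𝔻 => (z : ℂ) ^ 3 * G z
  have hrA : r ∈ A := hm ⟨_, ⟨fun z => z ^ 3 * G z, (differentiableOn_id.pow 3).mul hG,
    fun _ => rfl⟩, rfl⟩
  have hh : h = (U 0)⁻¹ • (f - algebraMap ℂ (𝔻 → ℂ) (f d0)) - r := by
    funext z
    have h3 := hpG z
    have h4 := hfU z
    simp only [h, r, zfun, Pi.sub_apply, Pi.smul_apply, Pi.mul_apply, Pi.pow_apply,
      Pi.algebraMap_apply, Algebra.algebraMap_self, RingHom.id_apply, smul_eq_mul]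
    linear_combination -(z : ℂ) ^ 2 * h3 - (U 0)⁻¹ * h4
  have hhA : h ∈ A := by
    rw [hh]
    exact sub_mem (A.smul_mem (sub_mem hfA (A.algebraMap_mem _)) _) hrA
  refine ⟨h, ⟨hhA, by simp [h, d0], hd1 h hhA, ?_⟩, fun z hz => ?_⟩
  · rw [der_two_eq (U := fun z => Complex.exp (p z)) 0 hp.cexp.differentiableOn
      (fun z => by simp [h])]
    simp [hp0]
  · exact mul_ne_zero (pow_ne_zero 2 fun hz0 => hz (Subtype.ext hz0)) (Complex.exp_ne_zero _)

end
end

section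
/- There is a unique cusp algebra of codimension 1: if A is a cusp algebra with cod(A) = 1, then A = { f ∈ O(𝔻) : f'(0) = 0 } (the algebra corresponding to the Neil parabola z³ = w²). -/
/-!
If some `f ∈ A` had `f'(0) ≠ 0`, then `u = f - f(0) = z h` with `h(0) ≠ 0` lies in `A`, and
`u ^ k = z ^ k h ^ k` has order exactly `k` at `0`. Subtracting a multiple of `u ^ k` from an element
of `z ^ k O(𝔻)` pushes it into `z ^ (k + 1) O(𝔻)`, so descending from `z ^ m O(𝔻) ⊆ A` gives
`O(𝔻) = z ^ 0 O(𝔻) ⊆ A` (`zO_zero_subset`), contradicting `cod A = 1`. Hence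
`A ⊆ {f | f'(0) = 0}`.
Conversely `z ∉ A`, so `z` spans the one-dimensional quotient `O(𝔻)/A`: any holomorphic `f` is
`c z` modulo `A`, and comparing derivatives at `0` gives `c = f'(0)`. So `f'(0) = 0` forces `f ∈ A`.
-/

open scoped Classical

noncomputable section

lemma der_one_eq {f : 𝔻 → ℂ} {F : ℂ → ℂ} (hF : DifferentiableOn ℂ F 𝔻)
    (hf : ∀ z : 𝔻, f z = F z) : der 1 0 f = deriv F 0 := by
  have h : IsHolo f := ⟨F, hF, hf⟩
  have hmem : 𝔻 ∈ nhds (0 : ℂ) := Metric.ball_mem_nhds 0 one_pos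
  rw [der, dif_pos h, iteratedDeriv_one]
  apply Filter.EventuallyEq.deriv_eq
  filter_upwards [hmem] with z hz
  rw [← h.choose_spec.2 ⟨z, hz⟩, hf ⟨z, hz⟩]

lemma der_one_sub {f g : 𝔻 → ℂ} (hf : IsHolo f) (hg : IsHolo g) :
    der 1 0 (f - g) = der 1 0 f - der 1 0 g := by
  obtain ⟨F, hF, hfF⟩ := hf
  obtain ⟨G, hG, hgG⟩ := hg
  have hmem : 𝔻 ∈ nhds (0 : ℂ) := Metric.ball_mem_nhds 0 one_pos
  rw [der_one_eq hF hfF, der_one_eq hG hgG,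
    der_one_eq (hF.sub hG) (fun z => by simp [hfF z, hgG z]),
    deriv_sub (hF.differentiableAt hmem) (hG.differentiableAt hmem)]

lemma isHolo_zfun : IsHolo zfun := ⟨fun z => z, differentiableOn_id, fun _ => rfl⟩

lemma isHolo_smul (c : ℂ) {f : 𝔻 → ℂ} (hf : IsHolo f) : IsHolo (c • f) :=
  HolDisk.smul_mem (show f ∈ HolDisk from hf) c

lemma der_one_smul_zfun (c : ℂ) : der 1 0 (c • zfun) = c := by
  rw [der_one_eq (F := fun z => c * z) (differentiableOn_id.const_mul c)
    (fun z => by simp [zfun])]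
  simp

/-- First-order Taylor expansion `f = f(0) + z g` with holomorphic remainder; the remainder is the
difference quotient `dslope` at `0`. -/
lemma exists_taylor {f : 𝔻 → ℂ} (hf : IsHolo f) :
    ∃ g, IsHolo g ∧ g d0 = der 1 0 f ∧ f = algebraMap ℂ (𝔻 → ℂ) (f d0) + zfun * g := by
  obtain ⟨F, hF, hfF⟩ := hf
  have hmem : 𝔻 ∈ nhds (0 : ℂ) := Metric.ball_mem_nhds 0 one_pos
  refine ⟨fun z => dslope F 0 z,
    ⟨dslope F 0, (Complex.differentiableOn_dslope hmem).2 hF, fun _ => rfl⟩, ?_, ?_⟩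
  · rw [der_one_eq hF hfF]
    exact dslope_same F 0
  · ext z
    have h := sub_smul_dslope F 0 (z : ℂ)
    simp only [sub_zero, smul_eq_mul] at h
    have h0 : f d0 = F 0 := hfF d0
    simp [zfun, h, h0, hfF z]

/-- The descent step: `u ^ k` kills the leading term of an element of `z ^ k O(𝔻)`. -/
lemma zO_subset_of_succ {A : Subalgebra ℂ (𝔻 → ℂ)} {h : 𝔻 → ℂ} (hh : IsHolo h)
    (h0 : h d0 ≠ 0) (hu : zfun * h ∈ A) {k : ℕ}
    (hk : (zO (k + 1) : Set (𝔻 → ℂ)) ⊆ A) : (zO k : Set (𝔻 → ℂ)) ⊆ A := by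
  rintro _ ⟨g, hg, rfl⟩
  set c : ℂ := g d0 / h d0 ^ k with hc
  have hq : IsHolo (g - c • h ^ k) :=
    HolDisk.sub_mem (show g ∈ HolDisk from hg)
      (HolDisk.smul_mem (HolDisk.pow_mem (show h ∈ HolDisk from hh) k) c)
  obtain ⟨q, hqH, -, hqe⟩ := exists_taylor hq
  have hz : (g - c • h ^ k) d0 = 0 := by
    simp [hc, h0]
  rw [hz, map_zero, zero_add] at hqe
  have hmem : zfun ^ (k + 1) * q ∈ A := hk ⟨q, hqH, rfl⟩
  have hsplit : zfun ^ k * g = zfun ^ (k + 1) * q + c • (zfun * h) ^ k := by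
    rw [pow_succ, mul_assoc, ← hqe, mul_pow, mul_sub, mul_smul_comm, sub_add_cancel]
  rw [hsplit]
  exact A.add_mem hmem (A.smul_mem (A.pow_mem hu k) c)

lemma zO_zero_subset {A : Subalgebra ℂ (𝔻 → ℂ)} {h : 𝔻 → ℂ} (hh : IsHolo h)
    (h0 : h d0 ≠ 0) (hu : zfun * h ∈ A) (m : ℕ)
    (hm : (zO m : Set (𝔻 → ℂ)) ⊆ A) : (zO 0 : Set (𝔻 → ℂ)) ⊆ A := by
  induction m with
  | zero => exact hm
  | succ k ih => exact ih (zO_subset_of_succ hh h0 hu hm)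

lemma holDisk_le_of_der_ne_zero {A : Subalgebra ℂ (𝔻 → ℂ)} (hA : IsCuspAlgebra A)
    {f : 𝔻 → ℂ} (hf : f ∈ A) (hd : der 1 0 f ≠ 0) : HolDisk ≤ A := by
  obtain ⟨hle, -, m, -, hm⟩ := hA
  obtain ⟨h, hh, hh0, hfe⟩ := exists_taylor (hle hf)
  have hu : zfun * h ∈ A := by
    rw [eq_sub_of_add_eq' hfe.symm]
    exact A.sub_mem hf (A.algebraMap_mem _)
  intro g hg
  exact zO_zero_subset hh (hh0 ▸ hd) hu m hm ⟨g, hg, by simp⟩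

/-- There is a unique cusp algebra of codimension `1`, namely
`{f ∈ O(𝔻) : f'(0) = 0}`. -/
theorem stmt_19 (A : Subalgebra ℂ (𝔻 → ℂ)) (hA : IsCuspAlgebra A)
    (hcod : cod A = 1) :
    ∀ f : 𝔻 → ℂ, f ∈ A ↔ (IsHolo f ∧ der 1 0 f = 0) := by
  have hsub : ∀ f ∈ A, der 1 0 f = 0 := by
    intro f hf
    by_contra hd
    have hle := holDisk_le_of_der_ne_zero hA hf hd
    have htop : A.toSubmodule.comap HolDisk.toSubmodule.subtype = ⊤ :=
      eq_top_iff.2 fun x _ => hle x.2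
    have : Subsingleton (OmodA A) := Submodule.Quotient.subsingleton_iff.2 htop
    have h0 : cod A = 0 := Module.finrank_zero_of_subsingleton
    omega
  intro f
  refine ⟨fun hf => ⟨hA.1 hf, hsub f hf⟩, fun ⟨hf, hd⟩ => ?_⟩
  let S := A.toSubmodule.comap HolDisk.toSubmodule.subtype
  let Z : HolDisk.toSubmodule := ⟨zfun, isHolo_zfun⟩
  let f' : HolDisk.toSubmodule := ⟨f, hf⟩
  have hZ : S.mkQ Z ≠ 0 := by
    intro h
    have hzA : zfun ∈ A := (Submodule.Quotient.mk_eq_zero S).1 h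
    have h1 := der_one_smul_zfun 1
    rw [one_smul, hsub _ hzA] at h1
    exact zero_ne_one h1
  obtain ⟨c, hc⟩ := (finrank_eq_one_iff_of_nonzero' _ hZ).1 hcod (S.mkQ f')
  rw [← map_smul] at hc
  have hmem : c • zfun - f ∈ A := (Submodule.Quotient.eq S).1 hc
  have hc0 : c = 0 := by
    have := hsub _ hmem
    rwa [der_one_sub (isHolo_smul c isHolo_zfun) hf, hd, sub_zero, der_one_smul_zfun] at this
  rw [hc0, zero_smul, zero_sub] at hmem
  simpa using A.neg_mem hmem

end
end
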